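/- The partial derivative of the fourth component f̃₄ of the spatial path-following error model with respect to z̃₃, evaluated at (x̃, ũ) = (0, 0), equals −v̄ · (tan β₃ᵣ / (L₂ L₃)) · (uᵣ L₂ − sin β₂ᵣ + M₁ cos β₂ᵣ · uᵣ) / (cos β₃ᵣ · Eᵣ). -/

import Mathlib

/-!
The lateral error `z̃₃` enters `f̃₄` only through the factor `1 - κ z̃₃`, which together with
`1 / cos θ̃₃` converts distance along the nominal path into distance travelled by the last trailer.
With all other variables held fixed, `f̃₄` is therefore affine in `z̃₃`, with slope
`-v̄ κ / cos θ̃₃` times the rate of change of `β₂` per distance travelled by the last trailer.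
-/

section PathFollowingError

variable (L₂ M₁ vb κ β₂r β₃r ur : ℝ)

/-- The factor `C₁(β₂, β₃, u)`: the velocity of the last trailer's axle divided by that of the
tractor's rear axle, where `u` is the curvature driven by the tractor. -/
noncomputable def velocityRatio (β₂ β₃ u : ℝ) : ℝ :=
  Real.cos β₃ * (Real.cos β₂ + M₁ * u * Real.sin β₂)

/-- The derivative of the joint angle `β₂` between tractor and dolly with respect to the distance
travelled by the last trailer's axle: the derivative per distance travelled by the tractor, divided
by `C₁`. -/
noncomputable def jointAngleRate (β₂ β₃ u : ℝ) : ℝ :=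
  (u - Real.sin β₂ / L₂ + (M₁ / L₂) * Real.cos β₂ * u) / velocityRatio M₁ β₂ β₃ u

/-- The component `f̃₄` of the spatial error model around the nominal values `β₂r`, `β₃r`, `ur`, as
a function of the state `(z, θ, β₃, β₂)` and input `u`, all of which are deviations from nominal;
`vb` is the motion direction `v̄`. The nominal curvature `κ` is an independent parameter; the model
has `κ = tan β₃r / L₃`. -/
noncomputable def jointAngleErrorRate (z θ β₃ β₂ u : ℝ) : ℝ :=
  vb * ((1 - κ * z) / Real.cos θ * jointAngleRate L₂ M₁ (β₂ + β₂r) (β₃ + β₃r) (u + ur)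
    - jointAngleRate L₂ M₁ β₂r β₃r ur)

theorem hasDerivAt_jointAngleErrorRate (z θ β₃ β₂ u : ℝ) :
    HasDerivAt (fun z ↦ jointAngleErrorRate L₂ M₁ vb κ β₂r β₃r ur z θ β₃ β₂ u)
      (vb * (-κ / Real.cos θ * jointAngleRate L₂ M₁ (β₂ + β₂r) (β₃ + β₃r) (u + ur))) z := by
  have lateral_factor : HasDerivAt (fun z ↦ 1 - κ * z) (-κ) z := by
    simpa only [mul_one, id] using ((hasDerivAt_id z).const_mul κ).const_sub 1
  exact (((lateral_factor.div_const _).mul_const _).sub_const _).const_mul vb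

variable {L₂} in
theorem jointAngleRate_eq_div_velocityRatio_div (hL₂ : L₂ ≠ 0) (β₂ β₃ u : ℝ) :
    jointAngleRate L₂ M₁ β₂ β₃ u =
      (u * L₂ - Real.sin β₂ + M₁ * Real.cos β₂ * u) / velocityRatio M₁ β₂ β₃ u / L₂ := by
  rw [jointAngleRate, div_right_comm]
  congr 1
  field_simp

variable {L₂ M₁ β₂r β₃r ur} in
theorem stmt_14_general (hL₂ : L₂ ≠ 0) {z θ β₃ β₂ u : ℝ} (_hθ : Real.cos θ ≠ 0)
    (_hC₁ : velocityRatio M₁ (β₂ + β₂r) (β₃ + β₃r) (u + ur) ≠ 0)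
    (_hC₁r : velocityRatio M₁ β₂r β₃r ur ≠ 0) :
    HasDerivAt (fun z ↦ jointAngleErrorRate L₂ M₁ vb κ β₂r β₃r ur z θ β₃ β₂ u)
      (-vb * (κ / L₂ / Real.cos θ) *
        (((u + ur) * L₂ - Real.sin (β₂ + β₂r) + M₁ * Real.cos (β₂ + β₂r) * (u + ur)) /
          velocityRatio M₁ (β₂ + β₂r) (β₃ + β₃r) (u + ur))) z := by
  convert hasDerivAt_jointAngleErrorRate L₂ M₁ vb κ β₂r β₃r ur z θ β₃ β₂ u using 1
  rw [jointAngleRate_eq_div_velocityRatio_div M₁ hL₂]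
  ring

end PathFollowingError

/-- ∂f̃₄/∂z̃₃ at the origin equals
−v̄·(tan β₃ᵣ/(L₂ L₃))·(uᵣ L₂ − sin β₂ᵣ + M₁ cos β₂ᵣ uᵣ)/(cos β₃ᵣ Eᵣ). -/
theorem stmt_14
    (L2 L3 M1 vb b2r b3r ur : ℝ)
    (hL2 : 0 < L2) (hL3 : 0 < L3)
    (hvb : vb = 1 ∨ vb = -1)
    (C1 : ℝ → ℝ → ℝ → ℝ)
    (hC1 : ∀ β2 β3 u, C1 β2 β3 u = Real.cos β3 * (Real.cos β2 + M1 * u * Real.sin β2))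
    (κ : ℝ) (hκ : κ = Real.tan b3r / L3)
    (Er : ℝ) (hEr : Er = Real.cos b2r + M1 * ur * Real.sin b2r)
    (hcos : Real.cos b3r ≠ 0) (hE : Er ≠ 0)
    (g : ℝ → ℝ)
    -- f̃₄ as a function of z̃₃ alone, the other error variables being zero:
    (hg : ∀ z, g z = vb * ( ((1 - κ * z) / Real.cos 0) *
        ( ((0 + ur) - Real.sin (0 + b2r) / L2 +
            (M1 / L2) * Real.cos (0 + b2r) * (0 + ur)) /
          C1 (0 + b2r) (0 + b3r) (0 + ur) )
      - ( (ur - Real.sin b2r / L2 + (M1 / L2) * Real.cos b2r * ur) /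
          C1 b2r b3r ur ) )) :
    HasDerivAt g
      (-vb * (Real.tan b3r / (L2 * L3)) *
        ((ur * L2 - Real.sin b2r + M1 * Real.cos b2r * ur) /
          (Real.cos b3r * Er))) 0 := by
  subst hκ hEr
  obtain rfl : C1 = velocityRatio M1 := funext₃ hC1
  obtain rfl : g = fun z ↦ jointAngleErrorRate L2 M1 vb _ b2r b3r ur z 0 0 0 0 := funext hg
  have nominal_ne_zero : velocityRatio M1 b2r b3r ur ≠ 0 := mul_ne_zero hcos hE
  simpa only [zero_add, Real.cos_zero, div_one, div_div, mul_comm L3, velocityRatio] using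
    stmt_14_general vb (Real.tan b3r / L3) hL2.ne' (z := 0) (θ := 0) (β₃ := 0) (β₂ := 0) (u := 0)
      (by simp) (by simpa using nominal_ne_zero) nominal_ne_zero
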